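/- Let K be a field and p_T a prime ideal of K[T,Y] with p_T ∩ K[T] = {0} whose extension p̃_T to K(T)[Y] is a maximal ideal such that the field K(T)[Y]/p̃_T is a finite separable extension of K(T) of degree n. Then there exists a Hilbert subset H of K^r such that for every t ∈ H, the specialized ideal p_t is a maximal ideal of K[Y] and K[Y]/p_t is a field extension of K of degree n. -/

import Mathlib

open MvPolynomial

noncomputable section

/-- The rational function field `K(T)` with variables indexed by `ι`,
realized as the fraction field of the polynomial ring. -/
abbrev RatFuncField (K : Type) [Field K] (ι : Type) : Type := FractionRing (MvPolynomial ι K)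

/-- `x ∈ K(T)` can be specialized at `t ∈ K^ι` with value `v`:
there is a representation `x = a/b` with `b(t) ≠ 0` and `v = a(t)/b(t)`. -/
def RatSpecializesTo (K : Type) [Field K] {ι : Type} (t : ι → K)
    (x : RatFuncField K ι) (v : K) : Prop :=
  ∃ a b : MvPolynomial ι K, MvPolynomial.eval t b ≠ 0 ∧
    algebraMap (MvPolynomial ι K) (RatFuncField K ι) b * x
      = algebraMap (MvPolynomial ι K) (RatFuncField K ι) a ∧
    MvPolynomial.eval t b * v = MvPolynomial.eval t a

/-- `P ∈ K(T)[Y]` specializes at `t` (coefficientwise) to `q ∈ K[Y]`. -/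
def PolySpecializesTo (K : Type) [Field K] {ι : Type} {s : ℕ} (t : ι → K)
    (P : MvPolynomial (Fin s) (RatFuncField K ι)) (q : MvPolynomial (Fin s) K) : Prop :=
  ∀ mono : Fin s →₀ ℕ, RatSpecializesTo K t (P.coeff mono) (q.coeff mono)

/-- `H` is a Hilbert subset of `K^ι`: the set of points where finitely many irreducible
polynomials of `K(T)[Y]` specialize to irreducible polynomials of `K[Y]`, intersected
with a nonempty Zariski-open subset. -/
def IsHilbertSubset (K : Type) [Field K] (ι : Type) (H : Set (ι → K)) : Prop :=
  ∃ (s l n : ℕ) (p : Fin l → MvPolynomial (Fin s) (RatFuncField K ι))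
    (g : Fin n → MvPolynomial ι K),
    (∀ i, Irreducible (p i)) ∧
    (∃ t : ι → K, ∃ j, MvPolynomial.eval t (g j) ≠ 0) ∧
    H = {t | (∃ j, MvPolynomial.eval t (g j) ≠ 0) ∧
      ∀ i, ∃ q : MvPolynomial (Fin s) K, PolySpecializesTo K t (p i) q ∧ Irreducible q}

/-- A subset of `K^ι` is Zariski-dense iff for every nonzero polynomial `g` it contains a
point where `g` does not vanish. -/
def IsZariskiDense (K : Type) [Field K] {ι : Type} (S : Set (ι → K)) : Prop :=
  ∀ g : MvPolynomial ι K, g ≠ 0 → ∃ t ∈ S, MvPolynomial.eval t g ≠ 0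

/-- A field is Hilbertian if all its Hilbert subsets (of all `K^r`, `r ≥ 1`) are
Zariski-dense. -/
def IsHilbertianField (K : Type) [Field K] : Prop :=
  ∀ r : ℕ, 0 < r → ∀ H : Set (Fin r → K), IsHilbertSubset K (Fin r) H → IsZariskiDense K H

/-- The canonical ring homomorphism `K[T,Y] → K(T)[Y]`. -/
def extHom (K : Type) [Field K] (r s : ℕ) :
    MvPolynomial (Fin r ⊕ Fin s) K →+* MvPolynomial (Fin s) (RatFuncField K (Fin r)) :=
  MvPolynomial.eval₂Hom
    ((MvPolynomial.C).comp
      ((algebraMap (MvPolynomial (Fin r) K) (RatFuncField K (Fin r))).comp MvPolynomial.C))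
    (Sum.elim
      (fun i => MvPolynomial.C
        (algebraMap (MvPolynomial (Fin r) K) (RatFuncField K (Fin r)) (MvPolynomial.X i)))
      (fun j => MvPolynomial.X j))

/-- The specialization homomorphism `K[T,Y] → K[Y]`, `T ↦ t`. -/
def specHom (K : Type) [Field K] {r s : ℕ} (t : Fin r → K) :
    MvPolynomial (Fin r ⊕ Fin s) K →+* MvPolynomial (Fin s) K :=
  MvPolynomial.eval₂Hom MvPolynomial.C
    (Sum.elim (fun i => MvPolynomial.C (t i)) (fun j => MvPolynomial.X j))

/-- `L` is a separable extension of `F` in the general sense (equivalently, `L` is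
linearly disjoint from the perfect closure of `F`, equivalently `L ⊗_F F̄` is reduced);
the extension is given by the ring homomorphism `f : F → L`. -/
def IsSepExtOfHom (F L : Type) [Field F] [CommRing L] (f : F →+* L) : Prop :=
  letI : Algebra F L := f.toAlgebra
  IsReduced (TensorProduct F (AlgebraicClosure F) L)

/-- `Frac(A)` is a separable extension of `F` in the general sense. -/
def IsSepOverBase (F : Type) [Field F] (A : Type) [CommRing A] [Algebra F A] : Prop :=
  IsSepExtOfHom F (FractionRing A) ((algebraMap A (FractionRing A)).comp (algebraMap F A))

/-- The height of an ideal: the infimum over primes containing it of the lengths of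
chains of primes below.  For a prime ideal this is the usual height. -/
def idealHeight {R : Type} [CommRing R] (I : Ideal R) : ℕ∞ :=
  ⨅ p : {q : PrimeSpectrum R // I ≤ q.asIdeal}, Order.height p.1

/-- The monomials in `s` variables of total degree at most `D`. -/
def MonLE (s D : ℕ) : Type := {m : Fin s →₀ ℕ // m.degree ≤ D}

noncomputable instance (s D : ℕ) : Fintype (MonLE s D) :=
  (Finsupp.finite_of_degree_le D).fintype

/-- The generic polynomial of degree `D`, with parameter variables `v m`, `m` a monomial of
degree at most `D`, as an element of `K[Λ][Y]`. -/
def genPoly (K : Type) [Field K] (s D : ℕ) {Λ : Type} (v : MonLE s D → Λ) :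
    MvPolynomial (Fin s) (MvPolynomial Λ K) :=
  ∑ m : MonLE s D, MvPolynomial.monomial m.1 (MvPolynomial.X (v m))

/-- The generic polynomial of degree `D` specialized at `lam ∈ K^{N_D}`. -/
def genPolyAt (K : Type) [Field K] (s D : ℕ) (lam : MonLE s D → K) :
    MvPolynomial (Fin s) K :=
  ∑ m : MonLE s D, MvPolynomial.monomial m.1 (lam m)

/-- Substitution `T_i ↦ U_i(Y)` as a ring homomorphism `K[T,Y] → K[Y]`. -/
def polySubstHom (K : Type) [Field K] {r s : ℕ} (U : Fin r → MvPolynomial (Fin s) K) :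
    MvPolynomial (Fin r ⊕ Fin s) K →+* MvPolynomial (Fin s) K :=
  MvPolynomial.eval₂Hom MvPolynomial.C (Sum.elim U (fun j => MvPolynomial.X j))

/-- The quasi-generic polynomial `Q_{S,R}(Λ,Y) = ∑_i Λ_i Q_i(Y) + R(Y)` of base `(S,R)`,
where `S = {monomial (m 0), …, monomial (m n)}`, as an element of `K[Λ][Y]`. -/
def quasiGen (K : Type) [Field K] {s n : ℕ} (m : Fin (n + 1) → (Fin s →₀ ℕ))
    (R : MvPolynomial (Fin s) K) :
    MvPolynomial (Fin s) (MvPolynomial (Fin (n + 1)) K) :=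
  (∑ i, MvPolynomial.monomial (m i) (MvPolynomial.X i)) +
    MvPolynomial.map (MvPolynomial.C) R

/-- Hypothesis (H) for the triple `(p, S, R)` (with `S` the set of monomials
`monomial (m i)`, `m 0 = 0`): the map `φ_{S,R}` sending `(a_1,…,a_n)` to the class mod `E`
of `∑_{i ≥ 1} a_i Q_i(Y) + R(Y)` in `B/E` is not identically zero, where `B = K[Y]/p` and
`E ⊆ B` is the subfield of elements algebraic over `K`. -/
def HypothesisH (K : Type) [Field K] {s n : ℕ} (p : Ideal (MvPolynomial (Fin s) K))
    (m : Fin (n + 1) → (Fin s →₀ ℕ)) (R : MvPolynomial (Fin s) K) : Prop :=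
  ∃ a : Fin (n + 1) → K,
    Ideal.Quotient.mk p ((∑ i ∈ Finset.univ.erase 0, MvPolynomial.monomial (m i) (a i)) + R)
      ∉ integralClosure K (MvPolynomial (Fin s) K ⧸ p)


/-- Compatibility data expressing that `R[Y]/I` and `R[X]/f` are isomorphic via `h`, `w`. -/
def IsoData {R : Type} [CommRing R] {s : ℕ} (I : Ideal (MvPolynomial (Fin s) R))
    (f : Polynomial R) (h : Fin s → Polynomial R) (w : MvPolynomial (Fin s) R) : Prop :=
  (∀ p ∈ I, f ∣ MvPolynomial.aeval h p) ∧ f ∣ MvPolynomial.aeval h w - Polynomial.X ∧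
  (∀ i, MvPolynomial.X i - Polynomial.aeval w (h i) ∈ I) ∧ Polynomial.aeval w f ∈ I

theorem map_aeval_mv {R R' : Type} [CommRing R] [CommRing R'] (φ : R →+* R') {s : ℕ}
    (h : Fin s → Polynomial R) (p : MvPolynomial (Fin s) R) :
    (MvPolynomial.aeval h p).map φ =
      MvPolynomial.aeval (fun i => (h i).map φ) (MvPolynomial.map φ p) := by
  induction p using MvPolynomial.induction_on with
  | C a => simp [Polynomial.algebraMap_eq]
  | add p q hp hq => simp [hp, hq]
  | mul_X p i hp => simp [hp]

theorem map_aeval_poly {R R' : Type} [CommRing R] [CommRing R'] (φ : R →+* R') {s : ℕ}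
    (w : MvPolynomial (Fin s) R) (p : Polynomial R) :
    MvPolynomial.map φ (Polynomial.aeval w p) =
      Polynomial.aeval (MvPolynomial.map φ w) (p.map φ) := by
  induction p using Polynomial.induction_on' with
  | add p q hp hq => simp [hp, hq]
  | monomial n a => simp [Polynomial.aeval_monomial, MvPolynomial.algebraMap_eq]

theorem isoData_span {R : Type} [CommRing R] {s m : ℕ} (P : Fin m → MvPolynomial (Fin s) R)
    (f : Polynomial R) (h : Fin s → Polynomial R) (w : MvPolynomial (Fin s) R)
    (ha : ∀ j, f ∣ MvPolynomial.aeval h (P j))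
    (hb : f ∣ MvPolynomial.aeval h w - Polynomial.X)
    (hc : ∀ i, MvPolynomial.X i - Polynomial.aeval w (h i) ∈ Ideal.span (Set.range P))
    (hd : Polynomial.aeval w f ∈ Ideal.span (Set.range P)) :
    IsoData (Ideal.span (Set.range P)) f h w := by
  refine ⟨?_, hb, hc, hd⟩
  have : Ideal.span (Set.range P) ≤ (Ideal.span {f}).comap (MvPolynomial.aeval h).toRingHom := by
    rw [Ideal.span_le]
    rintro _ ⟨j, rfl⟩
    simpa [Ideal.mem_span_singleton] using ha j
  intro p hp
  simpa [Ideal.mem_span_singleton] using this hp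

theorem IsoData.map {R R' : Type} [CommRing R] [CommRing R'] (φ : R →+* R') {s m : ℕ}
    {P : Fin m → MvPolynomial (Fin s) R}
    {f : Polynomial R} {h : Fin s → Polynomial R} {w : MvPolynomial (Fin s) R}
    (H : IsoData (Ideal.span (Set.range P)) f h w) :
    IsoData (Ideal.span (Set.range (fun j => MvPolynomial.map φ (P j)))) (f.map φ)
      (fun i => (h i).map φ) (MvPolynomial.map φ w) := by
  obtain ⟨ha, hb, hc, hd⟩ := H
  have key : ∀ x ∈ Ideal.span (Set.range P), MvPolynomial.map φ x ∈
      Ideal.span (Set.range (fun j => MvPolynomial.map φ (P j))) := by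
    intro x hx
    have := Ideal.mem_map_of_mem (MvPolynomial.map φ) hx
    rwa [Ideal.map_span, ← Set.range_comp] at this
  have dv : ∀ x : Polynomial R, f ∣ x → f.map φ ∣ x.map φ := fun x hx =>
    Polynomial.map_dvd φ hx
  refine isoData_span _ _ _ _ ?_ ?_ ?_ ?_
  · intro j
    rw [← map_aeval_mv]
    exact dv _ (ha _ (Ideal.subset_span ⟨j, rfl⟩))
  · have := dv _ hb
    rwa [Polynomial.map_sub, map_aeval_mv, Polynomial.map_X] at this
  · intro i
    have := key _ (hc i)
    rwa [map_sub, map_aeval_poly, MvPolynomial.map_X] at this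
  · have := key _ hd
    rwa [map_aeval_poly] at this

theorem IsoData.result {k : Type} [Field k] {s : ℕ} {I : Ideal (MvPolynomial (Fin s) k)}
    {f : Polynomial k} {h : Fin s → Polynomial k} {w : MvPolynomial (Fin s) k}
    (H : IsoData I f h w) (hf : Irreducible f) :
    I.IsMaximal ∧ Module.finrank k (MvPolynomial (Fin s) k ⧸ I) = f.natDegree := by
  obtain ⟨ha, hb, hc, hd⟩ := H
  have : Fact (Irreducible f) := ⟨hf⟩
  let φ : MvPolynomial (Fin s) k →ₐ[k] AdjoinRoot f :=
    (AdjoinRoot.mkₐ f).comp (MvPolynomial.aeval h)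
  have hφ : ∀ p, φ p = AdjoinRoot.mk f (MvPolynomial.aeval h p) := fun p => rfl
  have hroot : φ w = AdjoinRoot.root f := by
    rw [hφ, ← AdjoinRoot.mk_X, AdjoinRoot.mk_eq_mk]
    exact hb
  have hsurj : Function.Surjective φ := by
    intro x
    obtain ⟨q, rfl⟩ := AdjoinRoot.mk_surjective x
    refine ⟨Polynomial.aeval w q, ?_⟩
    rw [← Polynomial.aeval_algHom_apply, hroot, AdjoinRoot.aeval_eq]
  have hker : RingHom.ker φ = I := by
    ext p
    rw [RingHom.mem_ker, hφ, AdjoinRoot.mk_eq_zero]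
    refine ⟨fun hp => ?_, ha p⟩
    obtain ⟨q, hq⟩ := hp
    have h1 : Polynomial.aeval w (MvPolynomial.aeval h p) ∈ I := by
      rw [hq, map_mul]
      exact I.mul_mem_right _ hd
    rw [← Ideal.Quotient.eq_zero_iff_mem] at h1 ⊢
    rw [← h1]
    have : (Ideal.Quotient.mkₐ k I) = ((Ideal.Quotient.mkₐ k I).comp
        ((Polynomial.aeval w).comp (MvPolynomial.aeval h))) := by
      apply MvPolynomial.algHom_ext
      intro i
      simp only [AlgHom.comp_apply, MvPolynomial.aeval_X, Ideal.Quotient.mkₐ_eq_mk]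
      exact Ideal.Quotient.eq.2 (hc i)
    exact DFunLike.congr_fun this p
  subst hker
  refine ⟨RingHom.ker_isMaximal_of_surjective φ hsurj, ?_⟩
  rw [(Ideal.quotientKerAlgEquivOfSurjective hsurj).toLinearEquiv.finrank_eq]
  exact (AdjoinRoot.powerBasis hf.ne_zero).finrank.trans (by simp)

theorem exists_isoData {F : Type} [Field F] {s : ℕ} (I : Ideal (MvPolynomial (Fin s) F))
    [hI : I.IsMaximal] (hsep : Algebra.IsSeparable F (MvPolynomial (Fin s) F ⧸ I))
    (hfin : Module.Finite F (MvPolynomial (Fin s) F ⧸ I)) :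
    ∃ f h w, f.Monic ∧ Irreducible f ∧
      f.natDegree = Module.finrank F (MvPolynomial (Fin s) F ⧸ I) ∧ IsoData I f h w := by
  let _ : Field (MvPolynomial (Fin s) F ⧸ I) := Ideal.Quotient.field I
  obtain ⟨θ, hθ⟩ := Field.exists_primitive_element F (MvPolynomial (Fin s) F ⧸ I)
  have hint : IsIntegral F θ := Algebra.IsIntegral.isIntegral θ
  have hadj : ∀ x, ∃ q : Polynomial F, Polynomial.aeval θ q = x := by
    intro x
    have h1 := (IntermediateField.adjoin_simple_eq_top_iff_of_isAlgebraic hint.isAlgebraic).1 hθ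
    have h2 : x ∈ Algebra.adjoin F {θ} := h1 ▸ Algebra.mem_top
    rw [Algebra.adjoin_singleton_eq_range_aeval] at h2
    exact h2
  let φ := Ideal.Quotient.mkₐ F I
  have hφ : ∀ p, φ p = 0 ↔ p ∈ I := fun p => Ideal.Quotient.eq_zero_iff_mem
  choose h hh using fun i => hadj (φ (MvPolynomial.X i))
  obtain ⟨w, hw⟩ := Ideal.Quotient.mkₐ_surjective F I θ
  have hcomp : ∀ p, Polynomial.aeval θ (MvPolynomial.aeval h p) = φ p := by
    intro p
    have : (Polynomial.aeval θ).comp (MvPolynomial.aeval h) = φ := by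
      apply MvPolynomial.algHom_ext
      intro i
      simp [hh]
    exact DFunLike.congr_fun this p
  have hcomp2 : ∀ q : Polynomial F, φ (Polynomial.aeval w q) = Polynomial.aeval θ q := by
    intro q
    rw [← Polynomial.aeval_algHom_apply]
    exact congrArg (fun z => Polynomial.aeval z q) hw
  refine ⟨minpoly F θ, h, w, minpoly.monic hint, minpoly.irreducible hint,
    (Field.primitive_element_iff_minpoly_natDegree_eq F θ).1 hθ, ?_, ?_, ?_, ?_⟩
  · intro p hp
    rw [minpoly.dvd_iff, hcomp, hφ]
    exact hp
  · rw [minpoly.dvd_iff, map_sub, hcomp, Polynomial.aeval_X, sub_eq_zero]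
    exact hw
  · intro i
    rw [← hφ, map_sub, hcomp2, hh, sub_self]
  · rw [← hφ, hcomp2, minpoly.aeval]

/-- Descent of the data along an injective ring hom whose range contains all coefficients. -/
theorem exists_descent {F : Type} [Field F] {s m : ℕ}
    (P : Fin m → MvPolynomial (Fin s) F) (f : Polynomial F) (h : Fin s → Polynomial F)
    (w : MvPolynomial (Fin s) F) (H : IsoData (Ideal.span (Set.range P)) f h w) :
    ∃ S : Set F, S.Finite ∧ ∀ (A : Type) [CommRing A] (ι : A →+* F),
      Function.Injective ι → S ⊆ Set.range ι → ∀ P' : Fin m → MvPolynomial (Fin s) A,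
      (∀ j, MvPolynomial.map ι (P' j) = P j) →
      ∃ f' h' w', f'.map ι = f ∧ IsoData (Ideal.span (Set.range P')) f' h' w' := by
  obtain ⟨ha, hb, hc, hd⟩ := H
  choose Q hQ using fun j => ha (P j) (Ideal.subset_span ⟨j, rfl⟩)
  obtain ⟨Q', hQ'⟩ := hb
  simp only [Ideal.mem_span_range_iff_exists_fun] at hc hd
  choose c hc using hc
  obtain ⟨d, hd⟩ := hd
  refine ⟨(f.coeffs ∪ Q'.coeffs ∪ (⋃ i, ((h i).coeffs : Set F)) ∪ (⋃ j, ((Q j).coeffs : Set F)))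
    ∪ (w.coeffs ∪ (⋃ i, ⋃ j, ((c i j).coeffs : Set F)) ∪ (⋃ j, ((d j).coeffs : Set F))), ?_, ?_⟩
  · simp only [Set.finite_union]
    refine ⟨⟨⟨⟨Finset.finite_toSet _, Finset.finite_toSet _⟩, ?_⟩, ?_⟩,
      ⟨Finset.finite_toSet _, ?_⟩, ?_⟩
    · exact Set.finite_iUnion fun _ => Finset.finite_toSet _
    · exact Set.finite_iUnion fun _ => Finset.finite_toSet _
    · exact Set.finite_iUnion fun _ => Set.finite_iUnion fun _ => Finset.finite_toSet _
    · exact Set.finite_iUnion fun _ => Finset.finite_toSet _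
  · intro A _ ι hι hS P' hP'
    simp only [Set.union_subset_iff, Set.iUnion_subset_iff] at hS
    obtain ⟨⟨⟨⟨h1, h2⟩, h3⟩, h4⟩, ⟨h5, h6⟩, h7⟩ := hS
    have LP : ∀ q : Polynomial F, (q.coeffs : Set F) ⊆ Set.range ι →
        ∃ q' : Polynomial A, q'.map ι = q := by
      intro q hq
      exact (Polynomial.mem_lifts q).1 ((Polynomial.lifts_iff_coeffs_subset_range q).2 hq)
    have LM : ∀ q : MvPolynomial (Fin s) F, (q.coeffs : Set F) ⊆ Set.range ι →
        ∃ q' : MvPolynomial (Fin s) A, MvPolynomial.map ι q' = q := by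
      intro q hq
      exact MvPolynomial.mem_range_map_iff_coeffs_subset.2 hq
    obtain ⟨f', rfl⟩ := LP _ h1
    obtain ⟨Q'', rfl⟩ := LP _ h2
    choose h' hh' using fun i => LP _ (h3 i)
    choose q hq using fun i => LP _ (h4 i)
    obtain ⟨w', rfl⟩ := LM _ h5
    choose c' hc' using fun i j => LM _ (h6 i j)
    choose d' hd' using fun i => LM _ (h7 i)
    obtain rfl : (fun i => (h' i).map ι) = h := funext hh'
    have injP := Polynomial.map_injective ι hι
    have injM := MvPolynomial.map_injective (σ := Fin s) ι hι
    refine ⟨f', h', w', rfl, isoData_span _ _ _ _ ?_ ?_ ?_ ?_⟩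
    · intro j
      refine ⟨q j, injP ?_⟩
      rw [map_aeval_mv, Polynomial.map_mul, hq, hP', hQ]
    · refine ⟨Q'', injP ?_⟩
      rw [Polynomial.map_sub, map_aeval_mv, Polynomial.map_mul, Polynomial.map_X, hQ']
    · intro i
      rw [Ideal.mem_span_range_iff_exists_fun]
      refine ⟨c' i, injM ?_⟩
      rw [map_sum, map_sub, map_aeval_poly, MvPolynomial.map_X, ← hc i]
      simp [hc', hP']
    · rw [Ideal.mem_span_range_iff_exists_fun]
      refine ⟨d', injM ?_⟩
      rw [map_sum, map_aeval_poly, ← hd]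
      simp [hd', hP']

/-- The base change homomorphism `K[T,Y] → A[Y]` along `φ : K[T] → A`. -/
def baseHom {K : Type} [Field K] {r s : ℕ} {A : Type} [CommRing A]
    (φ : MvPolynomial (Fin r) K →+* A) :
    MvPolynomial (Fin r ⊕ Fin s) K →+* MvPolynomial (Fin s) A :=
  MvPolynomial.eval₂Hom ((MvPolynomial.C).comp (φ.comp MvPolynomial.C))
    (Sum.elim (fun i => MvPolynomial.C (φ (MvPolynomial.X i))) (fun j => MvPolynomial.X j))

theorem map_baseHom {K : Type} [Field K] {r s : ℕ} {A B : Type} [CommRing A] [CommRing B]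
    (φ : MvPolynomial (Fin r) K →+* A) (ψ : A →+* B) (p : MvPolynomial (Fin r ⊕ Fin s) K) :
    MvPolynomial.map ψ (baseHom φ p) = baseHom (ψ.comp φ) p := by
  have : (MvPolynomial.map ψ).comp (baseHom (s := s) φ) = baseHom (ψ.comp φ) := by
    apply MvPolynomial.ringHom_ext
    · intro a; simp [baseHom]
    · rintro (i | i) <;> simp [baseHom]
  exact DFunLike.congr_fun this p

theorem extHom_eq (K : Type) [Field K] (r s : ℕ) :
    extHom K r s = baseHom (algebraMap _ _) := rfl

theorem specHom_eq (K : Type) [Field K] {r s : ℕ} (t : Fin r → K) :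
    specHom (s := s) K t = baseHom (MvPolynomial.eval t) := by
  apply MvPolynomial.ringHom_ext
  · intro a; simp [baseHom, specHom]
  · rintro (i | i) <;> simp [baseHom, specHom]

theorem ratSpec_unique {K : Type} [Field K] {ι : Type} {t : ι → K} {x : RatFuncField K ι}
    {u v : K} (hu : RatSpecializesTo K t x u) (hv : RatSpecializesTo K t x v) : u = v := by
  obtain ⟨a, b, hb, h1, h2⟩ := hu
  obtain ⟨a', b', hb', h1', h2'⟩ := hv
  have h3 : b' * a = b * a' := by
    apply IsFractionRing.injective (MvPolynomial ι K) (RatFuncField K ι)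
    rw [map_mul, map_mul, ← h1, ← h1']
    ring
  have h4 := congrArg (MvPolynomial.eval t) h3
  rw [map_mul, map_mul, ← h2, ← h2'] at h4
  have : (MvPolynomial.eval t b' * MvPolynomial.eval t b) * u
    = (MvPolynomial.eval t b' * MvPolynomial.eval t b) * v := by linear_combination h4
  exact mul_left_cancel₀ (mul_ne_zero hb' hb) this

theorem ratSpec_inv {K : Type} [Field K] {ι : Type} {t : ι → K} {g : MvPolynomial ι K}
    (hg : g ≠ 0) {v : K}
    (h : RatSpecializesTo K t (-(algebraMap _ (RatFuncField K ι) g)⁻¹) v) :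
    MvPolynomial.eval t g ≠ 0 := by
  obtain ⟨a, b, hb, h1, -⟩ := h
  have hg' : algebraMap _ (RatFuncField K ι) g ≠ 0 := by
    simpa using hg
  intro h0
  apply hb
  have : b = -a * g := by
    apply IsFractionRing.injective (MvPolynomial ι K) (RatFuncField K ι)
    rw [map_mul, map_neg, ← h1]
    field_simp
  rw [this, map_mul, h0, mul_zero]

theorem exists_denom {K : Type} [Field K] {ι : Type} (S : Set (RatFuncField K ι))
    (hS : S.Finite) : ∃ g : MvPolynomial ι K, g ≠ 0 ∧ ∀ x ∈ S, ∃ a,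
      algebraMap _ (RatFuncField K ι) g * x = algebraMap (MvPolynomial ι K) (RatFuncField K ι) a := by
  obtain ⟨b, hb⟩ := IsLocalization.exist_integer_multiples_of_finset
    (nonZeroDivisors (MvPolynomial ι K)) hS.toFinset
  refine ⟨b, nonZeroDivisors.ne_zero b.2, fun x hx => ?_⟩
  obtain ⟨a, ha⟩ := hb x (by simpa using hx)
  refine ⟨a, ?_⟩
  rw [ha, Algebra.smul_def]

/-- If `p_T ⊆ K[T,Y]` is prime with `p_T ∩ K[T] = 0` and its extension
`p̃_T` to `K(T)[Y]` is maximal with `K(T)[Y]/p̃_T` a finite separable field extension of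
`K(T)` of degree `n`, then there is a Hilbert subset `H ⊆ K^r` such that for every
`t ∈ H` the specialized ideal `p_t` is maximal in `K[Y]` and `K[Y]/p_t` is a field
extension of `K` of degree `n`. -/
theorem stmt_19 (K : Type) [Field K] (r s : ℕ)
    (pT : Ideal (MvPolynomial (Fin r ⊕ Fin s) K)) (hprime : pT.IsPrime)
    (hcap : ∀ g : MvPolynomial (Fin r) K, MvPolynomial.rename Sum.inl g ∈ pT → g = 0)
    (hmax : (Ideal.map (extHom K r s) pT).IsMaximal)
    (hsep : Algebra.IsSeparable (RatFuncField K (Fin r))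
      (MvPolynomial (Fin s) (RatFuncField K (Fin r)) ⧸ Ideal.map (extHom K r s) pT))
    (hfin : Module.Finite (RatFuncField K (Fin r))
      (MvPolynomial (Fin s) (RatFuncField K (Fin r)) ⧸ Ideal.map (extHom K r s) pT))
    (n : ℕ) (hn : 0 < n)
    (hdeg : Module.finrank (RatFuncField K (Fin r))
      (MvPolynomial (Fin s) (RatFuncField K (Fin r)) ⧸ Ideal.map (extHom K r s) pT) = n) :
    ∃ H : Set (Fin r → K), IsHilbertSubset K (Fin r) H ∧ ∀ t ∈ H,
      (Ideal.map (specHom K t) pT).IsMaximal ∧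
      Module.finrank K (MvPolynomial (Fin s) K ⧸ Ideal.map (specHom K t) pT) = n := by
  obtain ⟨m, P, hP⟩ := Submodule.fg_iff_exists_fin_generating_family.1
    (IsNoetherian.noetherian pT)
  change Ideal.span (Set.range P) = pT at hP
  have hspan : ∀ {A : Type} [CommRing A]
      (φ : MvPolynomial (Fin r ⊕ Fin s) K →+* MvPolynomial (Fin s) A),
      Ideal.map φ pT = Ideal.span (Set.range fun j => φ (P j)) := by
    intro A _ φ
    rw [← hP, Ideal.map_span, ← Set.range_comp]
    rfl
  obtain ⟨f, h, w, hmon, hirr, hnat, hdata⟩ := exists_isoData _ hsep hfin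
  rw [hdeg] at hnat
  rw [hspan] at hdata
  obtain ⟨S, hSfin, hS⟩ := exists_descent _ f h w hdata
  obtain ⟨g, hg, hgS⟩ := exists_denom S hSfin
  have hgF : algebraMap _ (RatFuncField K (Fin r)) g ≠ 0 := by simpa using hg
  have hunit : ∀ y : Submonoid.powers g, IsUnit (algebraMap _ (RatFuncField K (Fin r)) y.1) := by
    rintro ⟨_, k, rfl⟩
    simp only [map_pow]
    exact (IsUnit.mk0 _ hgF).pow k
  let A := Localization (Submonoid.powers g)
  let ι : A →+* RatFuncField K (Fin r) := IsLocalization.lift hunit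
  have hιalg : ∀ a, ι (algebraMap _ A a) = algebraMap _ (RatFuncField K (Fin r)) a :=
    fun a => IsLocalization.lift_eq hunit a
  have hιmk : ∀ x (y : Submonoid.powers g), algebraMap _ (RatFuncField K (Fin r)) y.1 *
      ι (IsLocalization.mk' A x y) = algebraMap _ (RatFuncField K (Fin r)) x := by
    intro x y
    rw [← hιalg, ← map_mul, mul_comm, IsLocalization.mk'_spec, hιalg]
  have hιinj : Function.Injective ι := by
    rw [injective_iff_map_eq_zero]
    intro a ha
    obtain ⟨x, y, rfl⟩ := IsLocalization.exists_mk'_eq (Submonoid.powers g) a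
    have := hιmk x y
    rw [ha, mul_zero] at this
    have hx : x = 0 := by
      apply IsFractionRing.injective (MvPolynomial (Fin r) K) (RatFuncField K (Fin r))
      rw [← this, map_zero]
    rw [hx, IsLocalization.mk'_zero]
  have hrange : S ⊆ Set.range ι := by
    intro x hx
    obtain ⟨a, ha⟩ := hgS x hx
    refine ⟨IsLocalization.mk' A a ⟨g, Submonoid.mem_powers g⟩, ?_⟩
    have := hιmk a ⟨g, Submonoid.mem_powers g⟩
    rw [← ha] at this
    exact mul_left_cancel₀ hgF this
  obtain ⟨f', h', w', hf', hdata'⟩ := hS A ι hιinj hrange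
    (fun j => baseHom (algebraMap _ A) (P j)) (by
      intro j
      rw [map_baseHom, extHom_eq]
      congr 2
      exact RingHom.ext hιalg)
  have hmon' : f'.Monic := Polynomial.monic_of_injective hιinj (hf' ▸ hmon)
  have hnat' : f'.natDegree = n := by
    rw [← hnat, ← hf', hmon'.natDegree_map]
  let u := MvPolynomial.uniqueAlgEquiv (RatFuncField K (Fin r)) (Fin 1)
  let p : Fin 2 → MvPolynomial (Fin 1) (RatFuncField K (Fin r)) :=
    ![u.symm f, u.symm (Polynomial.X -
      Polynomial.C (algebraMap _ (RatFuncField K (Fin r)) g)⁻¹)]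
  refine ⟨_, ⟨1, 2, 1, p, fun _ => 1, ?_, ⟨0, 0, by simp⟩, rfl⟩, ?_⟩
  · intro i
    fin_cases i
    · exact (MulEquiv.irreducible_iff u.symm).2 hirr
    · exact (MulEquiv.irreducible_iff u.symm).2 (Polynomial.irreducible_X_sub_C _)
  · rintro t ⟨-, ht⟩
    have hgt : MvPolynomial.eval t g ≠ 0 := by
      obtain ⟨q, hq, -⟩ := ht 1
      have h0 := hq 0
      have : (p 1).coeff 0 = -(algebraMap _ (RatFuncField K (Fin r)) g)⁻¹ := by
        change (u.symm _).coeff 0 = _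
        rw [MvPolynomial.coeff_uniqueAlgEquiv_symm]
        simp
      rw [this] at h0
      exact ratSpec_inv hg h0
    have hunit' : ∀ y : Submonoid.powers g, IsUnit (MvPolynomial.eval t y.1) := by
      rintro ⟨_, k, rfl⟩
      simp only [map_pow]
      exact (IsUnit.mk0 _ hgt).pow k
    let ev : A →+* K := IsLocalization.lift hunit'
    have hevalg : ∀ a, ev (algebraMap _ A a) = MvPolynomial.eval t a :=
      fun a => IsLocalization.lift_eq hunit' a
    have hspec : ∀ a : A, RatSpecializesTo K t (ι a) (ev a) := by
      intro a
      obtain ⟨x, y, rfl⟩ := IsLocalization.exists_mk'_eq (Submonoid.powers g) a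
      refine ⟨x, y.1, (hunit' y).ne_zero, hιmk x y, ?_⟩
      rw [← hevalg, ← map_mul, mul_comm, IsLocalization.mk'_spec, hevalg]
    have hirr' : Irreducible (f'.map ev) := by
      obtain ⟨q, hq, hqi⟩ := ht 0
      have hqe : q = (MvPolynomial.uniqueAlgEquiv K (Fin 1)).symm (f'.map ev) := by
        ext d
        refine ratSpec_unique (hq d) ?_
        change RatSpecializesTo K t ((u.symm f).coeff d) _
        rw [MvPolynomial.coeff_uniqueAlgEquiv_symm, MvPolynomial.coeff_uniqueAlgEquiv_symm,
          ← hf', Polynomial.coeff_map, Polynomial.coeff_map]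
        exact hspec _
      rw [hqe] at hqi
      exact (MulEquiv.irreducible_iff (MvPolynomial.uniqueAlgEquiv K (Fin 1)).symm).1 hqi
    have hdt := hdata'.map ev
    have hI : Ideal.map (specHom K t) pT = Ideal.span (Set.range fun j =>
        MvPolynomial.map ev (baseHom (algebraMap _ A) (P j))) := by
      rw [hspan, specHom_eq]
      congr 2
      funext j
      rw [map_baseHom]
      congr 2
      exact (RingHom.ext hevalg).symm
    rw [hI]
    have := hdt.result hirr'
    rwa [hmon'.natDegree_map, hnat'] at this
end
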